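/- A finite multiset of n ≥ 8 triples admits a nice partial 2-coloring that colors exactly 4 triples with each of the two colors if and only if the multiset is fair and non-special. -/

import Mathlib

/-- `f` is a *nice partial `c`-coloring* of the multiset `T` of tuples: the color
classes `f j` form disjoint submultisets of `T` (some tuples may stay uncolored), and
for each color `j` and every element `i` appearing in some tuple of `T` there is a
tuple of color `j` not containing `i`. -/
def NicePartialColoring (c : ℕ) (T : Multiset (Finset ℕ+))
    (f : Fin c → Multiset (Finset ℕ+)) : Prop :=
  (∑ j, f j) ≤ T ∧
  ∀ j : Fin c, ∀ i : ℕ+, (∃ t ∈ T, i ∈ t) → ∃ t ∈ f j, i ∉ t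

/-- `T` is *`c`-fair*: every element appearing in some tuple of `T` is absent from at
least `c` of the tuples (counted with multiplicity). -/
def CFair (c : ℕ) (T : Multiset (Finset ℕ+)) : Prop :=
  ∀ i : ℕ+, (∃ t ∈ T, i ∈ t) →
    c ≤ Multiset.card (T.filter (fun t => i ∉ t))

/-- A multiset `T` of `n` triples is *special*: for some three distinct elements
`a, b, c` it consists of `n - 3` copies of the triple `{a, b, c}` together with three
further triples, one containing `a`, one containing `b` and one containing `c`, whose
other elements are distinct from `a`, `b`, `c`. -/
def Special (T : Multiset (Finset ℕ+)) : Prop :=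
  ∃ a b c : ℕ+, a ≠ b ∧ a ≠ c ∧ b ≠ c ∧
    ∃ t₁ t₂ t₃ : Finset ℕ+,
      T = Multiset.replicate (Multiset.card T - 3) {a, b, c} + {t₁, t₂, t₃} ∧
      a ∈ t₁ ∧ b ∉ t₁ ∧ c ∉ t₁ ∧
      a ∉ t₂ ∧ b ∈ t₂ ∧ c ∉ t₂ ∧
      a ∉ t₃ ∧ b ∉ t₃ ∧ c ∈ t₃

/-!
Since the triples have only three elements, two disjoint families with empty intersection can
always be trimmed and padded to four triples each, so a coloring of the required kind exists iff
the multiset is *splittable*. A special multiset is not: every triple meets `{a, b, c}`, hence a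
class with empty intersection uses two triples different from `{a, b, c}`, but there are only three.

Conversely, call an element tight if it is absent from exactly two triples.

* If two elements `a`, `b` are tight, all but at most four triples have the form `{a, b, c}`. The
  exceptional triples are distributed so that `a` and `b` are missed in both classes, and any two
  different triples `{a, b, c}`, `{a, b, d}` take care of the other elements of a class. This can
  only fail if all the triples `{a, b, c}` coincide, and then either another distribution of the
  exceptional triples works or the multiset is special.
* If at most one element is tight, a triple containing it can be deleted without losing fairness.
  Either the rest is special, and then the deleted triple makes a direct splitting possible, or by
  induction there are only eight triples left. In that case an element of degree `d` spoils at most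
  `2 * d.choose 4` of the `70` choices of a four-element class. As the degrees are at most `6`, add
  up to `24` and equal `6` at most once, the bound `2 * d.choose 4 ≤ 2 * d` for `d ≤ 5` and the
  surplus `18` at `d = 6` leave at most `66` spoiled choices.
-/

section AbsenceCounts

variable {α : Type*} [DecidableEq α] {S T : Multiset (Finset α)} {t : Finset α} {i : α} {k : ℕ}

/-- The number of members of `T`, counted with multiplicity, that do not contain `i`;
fairness bounds it below by `2`. -/
def absences (T : Multiset (Finset α)) (i : α) : ℕ :=
  T.countP (i ∉ ·)

@[simp]
theorem absences_cons (t : Finset α) (T : Multiset (Finset α)) (i : α) :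
    absences (t ::ₘ T) i = absences T i + if i ∈ t then 0 else 1 := by
  simp [absences, Multiset.countP_cons]

@[simp]
theorem absences_singleton (t : Finset α) (i : α) :
    absences {t} i = if i ∈ t then 0 else 1 := by
  simp [absences, ← Multiset.cons_zero, Multiset.countP_cons]

@[simp]
theorem absences_add (S T : Multiset (Finset α)) (i : α) :
    absences (S + T) i = absences S i + absences T i :=
  Multiset.countP_add ..

theorem absences_mono (h : S ≤ T) (i : α) : absences S i ≤ absences T i :=
  Multiset.countP_le_of_le _ h

theorem absences_pos : 0 < absences T i ↔ ∃ t ∈ T, i ∉ t :=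
  Multiset.countP_pos

theorem absences_eq_zero : absences T i = 0 ↔ ∀ t ∈ T, i ∈ t := by
  simp [absences, Multiset.countP_eq_zero]

theorem absences_eq_card : absences T i = T.card ↔ ∀ t ∈ T, i ∉ t :=
  Multiset.countP_eq_card

theorem countP_mem_add_absences (T : Multiset (Finset α)) (i : α) :
    T.countP (i ∈ ·) + absences T i = T.card :=
  (Multiset.card_eq_countP_add_countP (i ∈ ·) T).symm

theorem exists_mem_containing_of_subsingleton (hk : k < T.card)
    (hsub : {i | absences T i = k}.Subsingleton) :
    ∃ t ∈ T, ∀ i, absences T i = k → i ∈ t := by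
  rcases hsub.eq_empty_or_singleton with hempty | ⟨i, hi⟩
  · obtain ⟨t, ht⟩ := Multiset.card_pos_iff_exists_mem.1 (Nat.zero_lt_of_lt hk)
    exact ⟨t, ht, fun i hi => (hempty.subset hi).elim⟩
  · have hik : absences T i = k := hi.superset rfl
    have hne : absences T i ≠ T.card := by omega
    simp only [ne_eq, absences_eq_card, not_forall, not_not] at hne
    obtain ⟨t, ht, hit⟩ := hne
    exact ⟨t, ht, fun j hj => hi.subset hj ▸ hit⟩

theorem le_absences_of_le_absences_cons (h : ∀ i, k ≤ absences (t ::ₘ T) i)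
    (ht : ∀ i, absences (t ::ₘ T) i = k → i ∈ t) (i : α) : k ≤ absences T i := by
  have hi := h i
  have hti := ht i
  rw [absences_cons] at hi hti
  split_ifs at hi hti with hit
  · exact hi
  · have := mt hti hit
    omega

end AbsenceCounts

section Splitting

variable {α : Type*} [DecidableEq α] {A B D D₁ D₂ S S₁ S₂ T : Multiset (Finset α)}
  {s s₁ s₂ x : Finset α}

/-- The members of `A` have no common element, the condition on a color class of a nice coloring;
over an inhabited `α` this forces `A` to be nonempty. -/
def HasEmptyInter (A : Multiset (Finset α)) : Prop :=
  ∀ i, 0 < absences A i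

/-- `T` contains two disjoint submultisets, each without a common element: the two color classes
of a nice coloring, regardless of their sizes. -/
def Splittable (T : Multiset (Finset α)) : Prop :=
  ∃ A B, A + B ≤ T ∧ HasEmptyInter A ∧ HasEmptyInter B

theorem HasEmptyInter.mono (h : A ≤ B) (hA : HasEmptyInter A) : HasEmptyInter B :=
  fun i => (hA i).trans_le (absences_mono h i)

theorem hasEmptyInter_add (hD : ∀ i ∈ s, 0 < absences D i) (hS : ∀ i ∉ s, 0 < absences S i) :
    HasEmptyInter (D + S) := by
  intro i
  rw [absences_add]
  by_cases hi : i ∈ s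
  · exact Nat.add_pos_left (hD i hi) _
  · exact Nat.add_pos_right _ (hS i hi)

theorem Splittable.mono (h : S ≤ T) : Splittable S → Splittable T
  | ⟨A, B, hAB, hA, hB⟩ => ⟨A, B, hAB.trans h, hA, hB⟩

theorem Splittable.two_le_absences : Splittable T → ∀ i, 2 ≤ absences T i
  | ⟨A, B, hAB, hA, hB⟩, i => by
    have hle := absences_mono hAB i
    rw [absences_add] at hle
    have hAi := hA i
    have hBi := hB i
    omega

theorem splittable_add (hS : S₁ + S₂ ≤ S)
    (hD₁ : ∀ i ∈ s₁, 0 < absences D₁ i) (hS₁ : ∀ i ∉ s₁, 0 < absences S₁ i)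
    (hD₂ : ∀ i ∈ s₂, 0 < absences D₂ i) (hS₂ : ∀ i ∉ s₂, 0 < absences S₂ i) :
    Splittable (D₁ + D₂ + S) := by
  refine ⟨D₁ + S₁, D₂ + S₂, ?_, hasEmptyInter_add hD₁ hS₁, hasEmptyInter_add hD₂ hS₂⟩
  rw [add_add_add_comm]
  gcongr

theorem splittable_add_of_two_copies (hx : {x} + {x} ≤ S)
    (hD₁ : ∀ i ∈ x, 0 < absences D₁ i) (hD₂ : ∀ i ∈ x, 0 < absences D₂ i) :
    Splittable (D₁ + D₂ + S) :=
  have hoff : ∀ i ∉ x, 0 < absences {x} i := fun i hi => by simp [hi]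
  splittable_add hx hD₁ hoff hD₂ hoff

theorem HasEmptyInter.two_le_countP_ne (hA : HasEmptyInter A) (hx : x.Nonempty)
    (hmeet : ∀ t ∈ A, ¬ Disjoint t x) : 2 ≤ A.countP (· ≠ x) := by
  obtain ⟨i, hi⟩ := hx
  obtain ⟨t, htA, hit⟩ := absences_pos.1 (hA i)
  obtain ⟨j, hjt, hjx⟩ := Finset.not_disjoint_iff.1 (hmeet t htA)
  obtain ⟨u, huA, hju⟩ := absences_pos.1 (hA j)
  have htu : t ≠ u := fun h => hju (h ▸ hjt)
  have htx : t ≠ x := fun h => hit (h ▸ hi)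
  have hux : u ≠ x := fun h => hju (h ▸ hjx)
  have hle : t ::ₘ {u} ≤ A := by simp [Multiset.cons_le_of_notMem, htu, htA, huA]
  simpa [Multiset.countP_cons, ← Multiset.cons_zero, htx, hux]
    using Multiset.countP_le_of_le (· ≠ x) hle

end Splitting

section ColorClasses

variable {α : Type*} [DecidableEq α]

theorem HasEmptyInter.exists_le_card_le {A : Multiset (Finset α)} {s : Finset α}
    (hA : HasEmptyInter A) (hs : s ∈ A) :
    ∃ B ≤ A, HasEmptyInter B ∧ B.card ≤ s.card + 1 := by
  choose u huA hiu using fun i => absences_pos.1 (hA i)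
  refine ⟨(insert s (s.image u)).val, ?_, fun i => absences_pos.2 ?_, ?_⟩
  · rw [Finset.val_le_iff_val_subset]
    intro t ht
    simp only [Finset.mem_val, Finset.mem_insert, Finset.mem_image] at ht
    rcases ht with rfl | ⟨i, -, rfl⟩
    exacts [hs, huA i]
  · by_cases hi : i ∈ s
    · exact ⟨u i, Finset.mem_insert_of_mem (Finset.mem_image_of_mem u hi), hiu i⟩
    · exact ⟨s, Finset.mem_insert_self .., hi⟩
  · exact (Finset.card_insert_le ..).trans (by gcongr; exact Finset.card_image_le)

theorem exists_le_card_eq {β : Type*} {S : Multiset β} {n : ℕ} (h : n ≤ S.card) :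
    ∃ R ≤ S, R.card = n := by
  obtain ⟨R, hR⟩ := Multiset.card_pos_iff_exists_mem.1
    (Multiset.card_powersetCard n S ▸ Nat.choose_pos h)
  exact ⟨R, Multiset.mem_powersetCard.1 hR⟩

theorem exists_add_le_card_eq {β : Type*} {A B T : Multiset β} {m n : ℕ} (hAB : A + B ≤ T)
    (hA : A.card ≤ m) (hB : B.card ≤ n) (hT : m + n ≤ T.card) :
    ∃ A' B', A ≤ A' ∧ B ≤ B' ∧ A' + B' ≤ T ∧ A'.card = m ∧ B'.card = n := by
  obtain ⟨C, rfl⟩ := Multiset.le_iff_exists_add.1 hAB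
  simp only [Multiset.card_add] at hT
  obtain ⟨E, hEC, hE⟩ := exists_le_card_eq (show m - A.card ≤ C.card by omega)
  obtain ⟨F, rfl⟩ := Multiset.le_iff_exists_add.1 hEC
  rw [Multiset.card_add] at hT
  obtain ⟨G, hGF, hG⟩ := exists_le_card_eq (show n - B.card ≤ F.card by omega)
  refine ⟨A + E, B + G, Multiset.le_add_right .., Multiset.le_add_right .., ?_, ?_, ?_⟩
  · rw [add_add_add_comm]
    gcongr
  all_goals rw [Multiset.card_add]; omega

theorem exists_nicePartialColoring_iff_splittable {T : Multiset (Finset ℕ+)} {k : ℕ}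
    (hT : ∀ t ∈ T, t.card = k) (hn : 2 * (k + 1) ≤ T.card) :
    (∃ f : Fin 2 → Multiset (Finset ℕ+),
      NicePartialColoring 2 T f ∧ ∀ j, (f j).card = k + 1) ↔ Splittable T := by
  constructor
  · rintro ⟨f, ⟨hle, hf⟩, hcard⟩
    rw [Fin.sum_univ_two] at hle
    have hfT (j : Fin 2) : f j ≤ T := by
      fin_cases j
      exacts [(Multiset.le_add_right ..).trans hle, (Multiset.le_add_left ..).trans hle]
    have hempty (j : Fin 2) : HasEmptyInter (f j) := by
      intro i
      rw [absences_pos]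
      by_cases hi : ∃ t ∈ T, i ∈ t
      · exact hf j i hi
      · obtain ⟨t, ht⟩ := Multiset.card_pos_iff_exists_mem.1 (by simp [hcard j] : 0 < (f j).card)
        exact ⟨t, ht, fun hit => hi ⟨t, Multiset.mem_of_le (hfT j) ht, hit⟩⟩
    exact ⟨f 0, f 1, hle, hempty 0, hempty 1⟩
  · rintro ⟨A, B, hAB, hA, hB⟩
    have trim {C : Multiset (Finset ℕ+)} (hC : HasEmptyInter C) (hCT : C ≤ T) :
        ∃ D ≤ C, HasEmptyInter D ∧ D.card ≤ k + 1 := by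
      obtain ⟨s, hs, -⟩ := absences_pos.1 (hC 1)
      exact hT s (Multiset.mem_of_le hCT hs) ▸ hC.exists_le_card_le hs
    obtain ⟨A₀, hA₀A, hA₀, hA₀k⟩ := trim hA ((Multiset.le_add_right ..).trans hAB)
    obtain ⟨B₀, hB₀B, hB₀, hB₀k⟩ := trim hB ((Multiset.le_add_left ..).trans hAB)
    obtain ⟨A', B', hA', hB', hle, hA'k, hB'k⟩ :=
      exists_add_le_card_eq ((add_le_add hA₀A hB₀B).trans hAB) hA₀k hB₀k (by omega)
    refine ⟨![A', B'], ⟨by simpa using hle, fun j i _ => absences_pos.1 ?_⟩, fun j => ?_⟩ <;>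
      fin_cases j
    exacts [hA₀.mono hA' i, hB₀.mono hB' i, hA'k, hB'k]

theorem cFair_iff_forall_le_absences {T : Multiset (Finset ℕ+)} {c : ℕ} (hc : c ≤ T.card) :
    CFair c T ↔ ∀ i, c ≤ absences T i := by
  simp only [CFair, absences, ← Multiset.countP_eq_card_filter]
  refine ⟨fun h i => ?_, fun h i _ => h i⟩
  by_cases hi : ∃ t ∈ T, i ∈ t
  · exact h i hi
  · have hcard : T.countP (i ∉ ·) = T.card :=
      Multiset.countP_eq_card.2 fun t ht hit => hi ⟨t, ht, hit⟩
    exact hcard ▸ hc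

end ColorClasses

section BalancedSplit

theorem exists_card_eq_forall_not_subset {α ι : Type*} [Fintype ι] [DecidableEq ι] {k : ℕ}
    (hι : Fintype.card ι = 2 * k) (U : Finset α) (N : α → Finset ι)
    (h : ∑ i ∈ U, 2 * (N i).card.choose k < (2 * k).choose k) :
    ∃ A : Finset ι, A.card = k ∧ ∀ i ∈ U, ¬ A ⊆ N i ∧ ¬ Aᶜ ⊆ N i := by
  let bad (i : α) : Finset (Finset ι) :=
    (N i).powersetCard k ∪ ((N i).powersetCard k).image compl
  have hbad (i : α) : (bad i).card ≤ 2 * (N i).card.choose k := by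
    rw [two_mul, ← Finset.card_powersetCard]
    exact (Finset.card_union_le _ _).trans (add_le_add_right Finset.card_image_le _)
  have hlt : (U.biUnion bad).card < ((Finset.univ : Finset ι).powersetCard k).card := by
    rw [Finset.card_powersetCard, Finset.card_univ, hι]
    exact (Finset.card_biUnion_le.trans (Finset.sum_le_sum fun i _ => hbad i)).trans_lt h
  obtain ⟨A, hA, hAbad⟩ := Finset.exists_mem_notMem_of_card_lt_card hlt
  have hAk : A.card = k := (Finset.mem_powersetCard.1 hA).2
  refine ⟨A, hAk, fun i hi => ⟨fun hsub => hAbad ?_, fun hsub => hAbad ?_⟩⟩ <;>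
    refine Finset.mem_biUnion.2 ⟨i, hi, ?_⟩
  · exact Finset.mem_union_left _ (Finset.mem_powersetCard.2 ⟨hsub, hAk⟩)
  · refine Finset.mem_union_right _ (Finset.mem_image.2 ⟨Aᶜ, ?_, compl_compl A⟩)
    exact Finset.mem_powersetCard.2 ⟨hsub, by rw [Finset.card_compl]; omega⟩

variable {α : Type*} [DecidableEq α]

theorem splittable_of_sum_choose_lt {T : Multiset (Finset α)} {k : ℕ} (hk : k ≠ 0)
    (hT : T.card = 2 * k) {U : Finset α} (hU : ∀ t ∈ T, t ⊆ U)
    (h : ∑ i ∈ U, 2 * (T.countP (i ∈ ·)).choose k < (2 * k).choose k) : Splittable T := by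
  classical
  let N (i : α) : Finset T := Finset.univ.filter (i ∈ ·.1)
  have hN (i : α) : (N i).card = T.countP (i ∈ ·) := by
    conv_rhs => rw [← Multiset.map_univ_coe T, Multiset.countP_map]
    rfl
  obtain ⟨A, hAk, hA⟩ := exists_card_eq_forall_not_subset
    ((Multiset.card_coe T).trans hT) U N (by simpa only [hN] using h)
  have hempty {B : Finset T} (hBk : B.card = k) (hB : ∀ i ∈ U, ¬ B ⊆ N i) :
      HasEmptyInter (B.val.map (·.1)) := by
    intro i
    have hBN : ¬ B ⊆ N i := by
      by_cases hi : i ∈ U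
      · exact hB i hi
      · obtain ⟨j, hj⟩ := Finset.card_pos.1 (hBk ▸ Nat.pos_of_ne_zero hk)
        exact fun hsub => hi (hU j.1 (Multiset.coe_mem) (Finset.mem_filter.1 (hsub hj)).2)
    obtain ⟨j, hjB, hjN⟩ := Finset.not_subset.1 hBN
    exact absences_pos.2 ⟨j.1, Multiset.mem_map_of_mem _ hjB, by simpa [N] using hjN⟩
  have hAck : Aᶜ.card = k := by rw [Finset.card_compl, Multiset.card_coe]; omega
  refine ⟨A.val.map (·.1), Aᶜ.val.map (·.1), ?_, hempty hAk fun i hi => (hA i hi).1,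
    hempty hAck fun i hi => (hA i hi).2⟩
  rw [← Multiset.map_add, ← Finset.disjUnion_val _ _ disjoint_compl_right,
    Finset.disjUnion_eq_union, Finset.union_compl, Multiset.map_univ_coe]

theorem sum_countP_mem_eq_sum_card {T : Multiset (Finset α)} {U : Finset α}
    (hU : ∀ t ∈ T, t ⊆ U) :
    ∑ i ∈ U, T.countP (i ∈ ·) = (T.map Finset.card).sum := by
  induction T using Multiset.induction with
  | empty => simp
  | cons t T ih =>
    have ht : U.filter (· ∈ t) = t :=
      Finset.filter_mem_eq_inter.trans (Finset.inter_eq_right.2 (hU t (T.mem_cons_self t)))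
    simp only [Multiset.countP_cons, Finset.sum_add_distrib, Finset.sum_boole, ht,
      Multiset.map_cons, Multiset.sum_cons, ih fun u hu => hU u (Multiset.mem_cons_of_mem hu)]
    exact add_comm ..

theorem two_mul_choose_four_le {d : ℕ} (hd : d ≤ 6) :
    2 * d.choose 4 ≤ 2 * d + if d = 6 then 18 else 0 := by
  interval_cases d <;> decide

theorem splittable_of_card_eq_eight {T : Multiset (Finset α)} (hT : ∀ t ∈ T, t.card = 3)
    (hn : T.card = 8) (h2 : ∀ i, 2 ≤ absences T i)
    (htight : {i | absences T i = 2}.Subsingleton) : Splittable T := by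
  have hU : ∀ t ∈ T, t ⊆ T.sup := fun t ht => Multiset.le_sup ht
  have hdeg (i : α) : T.countP (i ∈ ·) ≤ 6 := by
    have hsum := countP_mem_add_absences T i
    have h2i := h2 i
    omega
  have hexcess : ∑ i ∈ T.sup, (if T.countP (i ∈ ·) = 6 then 18 else 0) ≤ 18 := by
    have hsix {i : α} (hi : T.countP (i ∈ ·) = 6) : absences T i = 2 := by
      have hsum := countP_mem_add_absences T i
      omega
    have hle : (T.sup.filter fun i => T.countP (i ∈ ·) = 6).card ≤ 1 :=
      Finset.card_le_one.2 fun a ha b hb =>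
        htight (hsix (Finset.mem_filter.1 ha).2) (hsix (Finset.mem_filter.1 hb).2)
    rw [← Finset.sum_filter, Finset.sum_const, smul_eq_mul]
    omega
  have hcount : ∑ i ∈ T.sup, T.countP (i ∈ ·) = 24 := by
    rw [sum_countP_mem_eq_sum_card hU, Multiset.map_congr rfl hT]
    simp [hn]
  have hlt : ∑ i ∈ T.sup, 2 * (T.countP (i ∈ ·)).choose 4 < Nat.choose (2 * 4) 4 :=
    calc ∑ i ∈ T.sup, 2 * (T.countP (i ∈ ·)).choose 4
        ≤ ∑ i ∈ T.sup, (2 * T.countP (i ∈ ·) + if T.countP (i ∈ ·) = 6 then 18 else 0) :=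
          Finset.sum_le_sum fun i _ => two_mul_choose_four_le (hdeg i)
      _ ≤ 2 * 24 + 18 := by
          rw [Finset.sum_add_distrib, ← Finset.mul_sum, hcount]
          gcongr
      _ < Nat.choose (2 * 4) 4 := by decide
  exact splittable_of_sum_choose_lt (by decide) hn hU hlt

end BalancedSplit

section TwoTightElements

variable {α : Type*} [DecidableEq α] {D₁ D₂ S : Multiset (Finset α)} {w x y u v u' v' : Finset α}

theorem eq_replicate_or_exists_ne {β : Type*} {S : Multiset β} (h : S ≠ 0) :
    (∃ x, S = Multiset.replicate S.card x) ∨ ∃ x y, x ≠ y ∧ {x, y} ≤ S := by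
  classical
  obtain ⟨x, hx⟩ := Multiset.exists_mem_of_ne_zero h
  by_cases hall : ∀ y ∈ S, y = x
  · exact .inl ⟨x, Multiset.eq_replicate_card.2 hall⟩
  · push Not at hall
    obtain ⟨y, hy, hyx⟩ := hall
    refine .inr ⟨x, y, hyx.symm, ?_⟩
    simp [Multiset.insert_eq_cons, Multiset.cons_le_of_notMem, hyx.symm, hx, hy]

theorem exists_ne_pairs_or_almost_constant {β : Type*} {S : Multiset β}
    (h : 4 ≤ S.card) :
    (∃ u v u' v', u ≠ v ∧ u' ≠ v' ∧ {u, v} + {u', v'} ≤ S) ∨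
      (∃ x, S = Multiset.replicate S.card x) ∨
      ∃ x y m, y ≠ x ∧ 2 ≤ m ∧ S = y ::ₘ Multiset.replicate m x := by
  have hS : S ≠ 0 := by rintro rfl; simp at h
  rcases eq_replicate_or_exists_ne hS with hconst | ⟨u, v, huv, hle⟩
  · exact .inr (.inl hconst)
  obtain ⟨R, rfl⟩ := Multiset.le_iff_exists_add.1 hle
  have hRcard : 2 ≤ R.card := by
    simp only [Multiset.card_add, Multiset.card_pair] at h
    omega
  have hR : R ≠ 0 := by rintro rfl; simp at hRcard
  rcases eq_replicate_or_exists_ne hR with ⟨x, hRx⟩ | ⟨u', v', huv', hle'⟩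
  · by_cases hux : u = x
    · refine .inr (.inr ⟨x, v, R.card + 1, hux ▸ huv.symm, by omega, ?_⟩)
      rw [hux, Multiset.pair_comm, Multiset.replicate_succ, ← hRx, Multiset.insert_eq_cons,
        Multiset.cons_add, Multiset.singleton_add]
    by_cases hvx : v = x
    · refine .inr (.inr ⟨x, u, R.card + 1, hux, by omega, ?_⟩)
      rw [hvx, Multiset.replicate_succ, ← hRx, Multiset.insert_eq_cons, Multiset.cons_add,
        Multiset.singleton_add]
    · refine .inl ⟨u, x, v, x, hux, hvx, ?_⟩
      have hxx : {x} + {x} ≤ R := hRx ▸ (Multiset.replicate_le_replicate x).2 hRcard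
      calc {u, x} + {v, x} = {u, v} + ({x} + {x}) := add_add_add_comm {u} {x} {v} {x}
        _ ≤ {u, v} + R := by gcongr
  · exact .inl ⟨u, v, u', v', huv, huv', by gcongr⟩

theorem absences_pair_pos_of_covBy (hu : w ⋖ u) (hv : w ⋖ v) (huv : u ≠ v) {i : α} (hi : i ∉ w) :
    0 < absences {u, v} i := by
  obtain ⟨c, -, rfl⟩ := Finset.covBy_iff_exists_insert.1 hu
  obtain ⟨d, -, rfl⟩ := Finset.covBy_iff_exists_insert.1 hv
  have hcd : i ≠ c ∨ i ≠ d := by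
    by_contra! h
    exact huv (by rw [← h.1, ← h.2])
  rw [absences_pos]
  rcases hcd with h | h
  · exact ⟨insert c w, by simp, by simp [h, hi]⟩
  · exact ⟨insert d w, by simp, by simp [h, hi]⟩

theorem splittable_add_of_ne_pairs (hw₁ : ∀ i ∈ w, 0 < absences D₁ i)
    (hw₂ : ∀ i ∈ w, 0 < absences D₂ i) (hS : ∀ t ∈ S, w ⋖ t) (huv : u ≠ v) (huv' : u' ≠ v')
    (hle : {u, v} + {u', v'} ≤ S) : Splittable (D₁ + D₂ + S) := by
  have hcov : ∀ t ∈ ({u, v} + {u', v'} : Multiset (Finset α)), w ⋖ t :=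
    fun t ht => hS t (Multiset.mem_of_le hle ht)
  exact splittable_add hle
    hw₁ (fun i => absences_pair_pos_of_covBy (hcov u (by simp)) (hcov v (by simp)) huv)
    hw₂ (fun i => absences_pair_pos_of_covBy (hcov u' (by simp)) (hcov v' (by simp)) huv')

theorem splittable_add_cons_of_left (hD₁ : ∀ i ∈ x, 0 < absences D₁ i)
    (hD₂ : ∀ i ∈ w, 0 < absences D₂ i) (hx : w ⋖ x) (hy : w ⋖ y) (hyx : y ≠ x)
    (hxx : {x} + {x} ≤ S) : Splittable (D₁ + D₂ + y ::ₘ S) := by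
  refine splittable_add (S₁ := {x}) (S₂ := {y, x}) ?_ hD₁ (fun i hi => by simp [hi])
    hD₂ fun i => absences_pair_pos_of_covBy hy hx hyx
  calc {x} + {y, x} = y ::ₘ ({x} + {x}) := Multiset.add_cons ..
    _ ≤ y ::ₘ S := Multiset.cons_le_cons y hxx

theorem splittable_add_cons_replicate {m : ℕ} (hw₁ : ∀ i ∈ w, 0 < absences D₁ i)
    (hw₂ : ∀ i ∈ w, 0 < absences D₂ i) (hx : w ⋖ x) (hy : w ⋖ y) (hyx : y ≠ x) (hm : 2 ≤ m)
    (h2 : ∀ i, 2 ≤ absences (D₁ + D₂ + y ::ₘ Multiset.replicate m x) i) :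
    Splittable (D₁ + D₂ + y ::ₘ Multiset.replicate m x) := by
  obtain ⟨c, -, rfl⟩ := Finset.covBy_iff_exists_insert.1 hx
  have hxx : {insert c w} + {insert c w} ≤ Multiset.replicate m (insert c w) :=
    (Multiset.replicate_le_replicate _).2 hm
  have hrep : absences (Multiset.replicate m (insert c w)) c = 0 :=
    absences_eq_zero.2 fun t ht => Multiset.eq_of_mem_replicate ht ▸ Finset.mem_insert_self c w
  have hc := h2 c
  rw [absences_add, absences_add, absences_cons, hrep] at hc
  have hor : 0 < absences D₁ c ∨ 0 < absences D₂ c := by split_ifs at hc <;> omega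
  rcases hor with hc₁ | hc₂
  · have hD₁ := (Finset.forall_mem_insert c w _).2 ⟨hc₁, hw₁⟩
    exact splittable_add_cons_of_left hD₁ hw₂ hx hy hyx hxx
  · have hD₂ := (Finset.forall_mem_insert c w _).2 ⟨hc₂, hw₂⟩
    rw [add_comm D₁]
    exact splittable_add_cons_of_left hD₂ hw₁ hx hy hyx hxx

theorem splittable_add_or_constant (hw₁ : ∀ i ∈ w, 0 < absences D₁ i)
    (hw₂ : ∀ i ∈ w, 0 < absences D₂ i) (hS : ∀ t ∈ S, w ⋖ t) (hcard : 4 ≤ S.card)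
    (h2 : ∀ i, 2 ≤ absences (D₁ + D₂ + S) i) :
    Splittable (D₁ + D₂ + S) ∨
      ∃ c ∉ w, S = Multiset.replicate S.card (insert c w) ∧
        2 ≤ absences D₁ c + absences D₂ c ∧ (absences D₁ c = 0 ∨ absences D₂ c = 0) := by
  rcases exists_ne_pairs_or_almost_constant hcard with
    ⟨u, v, u', v', huv, huv', hle⟩ | ⟨x, hx⟩ | ⟨x, y, m, hyx, hm, rfl⟩
  · exact .inl (splittable_add_of_ne_pairs hw₁ hw₂ hS huv huv' hle)
  · have hwx : w ⋖ x := hS x (hx ▸ Multiset.mem_replicate.2 ⟨by omega, rfl⟩)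
    obtain ⟨c, hcw, rfl⟩ := Finset.covBy_iff_exists_insert.1 hwx
    have hSc : absences S c = 0 :=
      absences_eq_zero.2 fun t ht =>
        Multiset.eq_replicate_card.1 hx t ht ▸ Finset.mem_insert_self c w
    have hc := h2 c
    rw [absences_add, absences_add, hSc] at hc
    by_cases hpos : 0 < absences D₁ c ∧ 0 < absences D₂ c
    · have hxx : {insert c w} + {insert c w} ≤ S :=
        hx ▸ (Multiset.replicate_le_replicate _).2 (show 2 ≤ S.card by omega)
      exact .inl (splittable_add_of_two_copies hxx
        ((Finset.forall_mem_insert ..).2 ⟨hpos.1, hw₁⟩)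
        ((Finset.forall_mem_insert ..).2 ⟨hpos.2, hw₂⟩))
    · exact .inr ⟨c, hcw, hx, hc, by omega⟩
  · refine .inl (splittable_add_cons_replicate hw₁ hw₂ (hS x ?_) (hS y (by simp)) hyx hm h2)
    exact Multiset.mem_cons_of_mem (Multiset.mem_replicate.2 ⟨by omega, rfl⟩)

theorem splittable_of_two_disjoint {p p' : Finset α} (hp : Disjoint w p) (hp' : Disjoint w p')
    (hS : ∀ t ∈ S, w ⋖ t) (hcard : 4 ≤ S.card) (h2 : ∀ i, 2 ≤ absences ({p} + {p'} + S) i) :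
    Splittable ({p} + {p'} + S) := by
  refine (splittable_add_or_constant (w := w) ?_ ?_ hS hcard h2).resolve_right ?_
  · exact fun i hi => by simp [Finset.disjoint_left.1 hp hi]
  · exact fun i hi => by simp [Finset.disjoint_left.1 hp' hi]
  · rintro ⟨c, -, -, hsum, hzero⟩
    simp only [absences_singleton] at hsum hzero
    grind

theorem splittable_of_two_avoiding_each {a b : α} {q q' r r' : Finset α}
    (hq : a ∉ q) (hq' : a ∉ q') (hr : b ∉ r) (hr' : b ∉ r') (hS : ∀ t ∈ S, {a, b} ⋖ t)
    (hcard : 4 ≤ S.card) (h2 : ∀ i, 2 ≤ absences ({q, q'} + {r, r'} + S) i) :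
    Splittable ({q, q'} + {r, r'} + S) := by
  have hpair {q r : Finset α} (hq : a ∉ q) (hr : b ∉ r) :
      ∀ i ∈ ({a, b} : Finset α), 0 < absences {q, r} i := by
    simp only [Finset.forall_mem_insert, Finset.mem_singleton, forall_eq]
    exact ⟨absences_pos.2 ⟨q, by simp, hq⟩, absences_pos.2 ⟨r, by simp, hr⟩⟩
  have hstraight : ({q, q'} + {r, r'} : Multiset (Finset α)) = {q, r} + {q', r'} :=
    add_add_add_comm ({q} : Multiset (Finset α)) {q'} {r} {r'}
  have hcrossed : ({q, q'} + {r, r'} : Multiset (Finset α)) = {q, r'} + {q', r} := by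
    rw [Multiset.pair_comm r r']
    exact add_add_add_comm ({q} : Multiset (Finset α)) {q'} {r'} {r}
  rcases splittable_add_or_constant (hpair hq hr) (hpair hq' hr') hS hcard (hstraight ▸ h2) with
    h | ⟨c, hc, hSc, hsum, hzero⟩
  · exact hstraight ▸ h
  rcases splittable_add_or_constant (hpair hq hr') (hpair hq' hr) hS hcard (hcrossed ▸ h2) with
    h | ⟨d, hd, hSd, -, hzero'⟩
  · exact hcrossed ▸ h
  · have hcd : insert c {a, b} = insert d ({a, b} : Finset α) :=
      Multiset.replicate_right_injective (show S.card ≠ 0 by omega) (hSc.symm.trans hSd)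
    obtain rfl : c = d := (Finset.insert_inj hc).1 hcd
    simp only [Multiset.insert_eq_cons, absences_cons, absences_singleton] at hsum hzero hzero'
    grind

end TwoTightElements

section Special

variable {T : Multiset (Finset ℕ+)}

theorem Splittable.not_special (hT : Splittable T) : ¬ Special T := by
  obtain ⟨A, B, hAB, hA, hB⟩ := hT
  rintro ⟨a, b, c, -, -, -, t₁, t₂, t₃, hT, ha₁, -, -, -, hb₂, -, -, -, hc₃⟩
  have hmeet : ∀ t ∈ T, ¬ Disjoint t {a, b, c} := by
    rw [hT]
    intro t ht
    simp only [Multiset.mem_add, Multiset.mem_replicate, Multiset.insert_eq_cons,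
      Multiset.mem_cons, Multiset.mem_singleton] at ht
    rcases ht with ⟨-, rfl⟩ | rfl | rfl | rfl <;> rw [Finset.not_disjoint_iff]
    exacts [⟨a, by simp⟩, ⟨a, ha₁, by simp⟩, ⟨b, hb₂, by simp⟩, ⟨c, hc₃, by simp⟩]
  have hcount : T.countP (· ≠ {a, b, c}) ≤ 3 := by
    rw [hT, Multiset.countP_add, Multiset.countP_eq_zero.2, zero_add]
    · exact Multiset.countP_le_card ..
    · exact fun t ht => not_not.2 (Multiset.eq_of_mem_replicate ht)
  have hle := Multiset.countP_le_of_le (· ≠ {a, b, c}) hAB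
  rw [Multiset.countP_add] at hle
  have hA2 := hA.two_le_countP_ne (Finset.insert_nonempty a {b, c}) fun t ht =>
    hmeet t (Multiset.mem_of_le hAB (Multiset.mem_add.2 (.inl ht)))
  have hB2 := hB.two_le_countP_ne (Finset.insert_nonempty a {b, c}) fun t ht =>
    hmeet t (Multiset.mem_of_le hAB (Multiset.mem_add.2 (.inr ht)))
  omega

theorem splittable_or_special {a b : ℕ+} {p q r : Finset ℕ+} {S : Multiset (Finset ℕ+)}
    (hab : a ≠ b) (hap : a ∉ p) (hbp : b ∉ p) (haq : a ∉ q) (hbq : b ∈ q) (har : a ∈ r)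
    (hbr : b ∉ r) (hS : ∀ t ∈ S, {a, b} ⋖ t) (hcard : 4 ≤ S.card)
    (h2 : ∀ i, 2 ≤ absences ({p} + {q, r} + S) i) :
    Splittable ({p} + {q, r} + S) ∨ Special ({p} + {q, r} + S) := by
  refine (splittable_add_or_constant (w := {a, b}) ?_ ?_ hS hcard h2).imp_right ?_
  · simp [hap, hbp]
  · simp [haq, hbr, hbq, har]
  rintro ⟨c, hc, hSc, hsum, hzero⟩
  simp only [Finset.mem_insert, Finset.mem_singleton, not_or] at hc
  have hmem : c ∈ p ∧ c ∉ q ∧ c ∉ r := by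
    simp only [Multiset.insert_eq_cons, absences_cons, absences_singleton] at hsum hzero
    grind
  obtain ⟨hcp, hcq, hcr⟩ := hmem
  refine ⟨a, b, c, hab, Ne.symm hc.1, Ne.symm hc.2, r, q, p, ?_,
    har, hbr, hcr, haq, hbq, hcq, hap, hbp, hcp⟩
  have hcardS : ({p} + {q, r} + S).card - 3 = S.card := by
    simp only [Multiset.card_add, Multiset.card_singleton, Multiset.card_pair]
    omega
  have hx : ({a, b, c} : Finset ℕ+) = insert c {a, b} := by
    rw [Finset.insert_comm c, Finset.pair_comm c]
  have htriples : ({r, q, p} : Multiset (Finset ℕ+)) = {p} + {q, r} := by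
    simp only [Multiset.insert_eq_cons, ← Multiset.singleton_add]
    abel
  rw [hcardS, hx, ← hSc, htriples, add_comm]

theorem exists_eq_add_by_mem {α : Type*} (T : Multiset (Finset α)) (a b : α) :
    ∃ P Q R S, T = P + Q + R + S ∧ (∀ t ∈ P, a ∉ t ∧ b ∉ t) ∧ (∀ t ∈ Q, a ∉ t ∧ b ∈ t) ∧
      (∀ t ∈ R, a ∈ t ∧ b ∉ t) ∧ ∀ t ∈ S, a ∈ t ∧ b ∈ t := by
  classical
  refine ⟨(T.filter (a ∉ ·)).filter (b ∉ ·), (T.filter (a ∉ ·)).filter (¬ b ∉ ·),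
    (T.filter (¬ a ∉ ·)).filter (b ∉ ·), (T.filter (¬ a ∉ ·)).filter (¬ b ∉ ·), ?_, ?_⟩
  · rw [add_assoc, Multiset.filter_add_not, Multiset.filter_add_not, Multiset.filter_add_not]
  · simp +contextual

theorem splittable_of_two_tight (hT : ∀ t ∈ T, t.card = 3) (hn : 8 ≤ T.card)
    (h2 : ∀ i, 2 ≤ absences T i) (hsp : ¬ Special T) {a b : ℕ+} (hab : a ≠ b)
    (ha : absences T a = 2) (hb : absences T b = 2) : Splittable T := by
  obtain ⟨P, Q, R, S, rfl, hP, hQ, hR, hS⟩ := exists_eq_add_by_mem T a b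
  simp only [forall_and] at hP hQ hR hS
  simp only [absences_add, absences_eq_card.2 hP.1, absences_eq_card.2 hQ.1,
    absences_eq_zero.2 hR.1, absences_eq_zero.2 hS.1] at ha
  simp only [absences_add, absences_eq_card.2 hP.2, absences_eq_zero.2 hQ.2,
    absences_eq_card.2 hR.2, absences_eq_zero.2 hS.2] at hb
  simp only [Multiset.card_add] at hn
  have hcov : ∀ t ∈ S, {a, b} ⋖ t := by
    intro t ht
    rw [Finset.covBy_iff_exists_insert, Finset.exists_eq_insert_iff, Finset.card_pair hab,
      hT t (Multiset.mem_add.2 (.inr ht)), Finset.insert_subset_iff, Finset.singleton_subset_iff]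
    exact ⟨⟨hS.1 t ht, hS.2 t ht⟩, rfl⟩
  obtain hP0 | hP1 | hP2 : P.card = 0 ∨ P.card = 1 ∨ P.card = 2 := by omega
  · obtain rfl := Multiset.card_eq_zero.1 hP0
    obtain ⟨q, q', rfl⟩ := Multiset.card_eq_two.1 (show Q.card = 2 by omega)
    obtain ⟨r, r', rfl⟩ := Multiset.card_eq_two.1 (show R.card = 2 by omega)
    rw [zero_add] at h2 ⊢
    exact splittable_of_two_avoiding_each (hQ.1 q (by simp)) (hQ.1 q' (by simp))
      (hR.2 r (by simp)) (hR.2 r' (by simp)) hcov (by omega) h2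
  · obtain ⟨p, rfl⟩ := Multiset.card_eq_one.1 hP1
    obtain ⟨q, rfl⟩ := Multiset.card_eq_one.1 (show Q.card = 1 by omega)
    obtain ⟨r, rfl⟩ := Multiset.card_eq_one.1 (show R.card = 1 by omega)
    have hqr : ({p} + {q} + {r} : Multiset (Finset ℕ+)) = {p} + {q, r} :=
      add_assoc ({p} : Multiset (Finset ℕ+)) {q} {r}
    rw [hqr] at h2 hsp ⊢
    exact (splittable_or_special hab (hP.1 p (by simp)) (hP.2 p (by simp)) (hQ.1 q (by simp))
      (hQ.2 q (by simp)) (hR.1 r (by simp)) (hR.2 r (by simp)) hcov (by omega) h2).resolve_right hsp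
  · obtain ⟨p, p', rfl⟩ := Multiset.card_eq_two.1 hP2
    obtain rfl := Multiset.card_eq_zero.1 (show Q.card = 0 by omega)
    obtain rfl := Multiset.card_eq_zero.1 (show R.card = 0 by omega)
    rw [add_zero, add_zero] at h2 ⊢
    refine splittable_of_two_disjoint (w := {a, b}) (p := p) (p' := p') ?_ ?_ hcov (by omega) h2
    · simp [hP.1 p, hP.2 p]
    · simp [hP.1 p', hP.2 p']

theorem splittable_cons_of_special {t : Finset ℕ+} (ht : t.card = 3) (hn : 5 ≤ T.card)
    (hT : Special T) (hsp : ¬ Special (t ::ₘ T)) : Splittable (t ::ₘ T) := by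
  obtain ⟨a, b, c, hab, hac, hbc, t₁, t₂, t₃, hT, h₁a, h₁b, h₁c, h₂a, h₂b, h₂c, h₃a, h₃b, h₃c⟩ := hT
  have hne : {a, b, c} ≠ t := by
    rintro rfl
    refine hsp ⟨a, b, c, hab, hac, hbc, t₁, t₂, t₃, ?_,
      h₁a, h₁b, h₁c, h₂a, h₂b, h₂c, h₃a, h₃b, h₃c⟩
    rw [Multiset.card_cons, Nat.sub_add_comm (by omega), Multiset.replicate_succ,
      Multiset.cons_add, ← hT]
  have hmiss : a ∉ t ∨ b ∉ t ∨ c ∉ t := by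
    by_contra! h
    refine hne (Finset.eq_of_subset_of_card_le ?_ ?_)
    · simpa [Finset.insert_subset_iff] using h
    · rw [ht, Finset.card_eq_three.2 ⟨a, b, c, hab, hac, hbc, rfl⟩]
  generalize hx : ({a, b, c} : Finset ℕ+) = x at hT
  have hxx : {x} + {x} ≤ Multiset.replicate (T.card - 3) x :=
    (Multiset.replicate_le_replicate x).2 (show 2 ≤ T.card - 3 by omega)
  generalize T.card - 3 = m at hT hxx
  have hsplit {D₁ D₂ : Multiset (Finset ℕ+)} (hD : t ::ₘ {t₁, t₂, t₃} = D₁ + D₂)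
      (hD₁ : ∀ i ∈ x, 0 < absences D₁ i) (hD₂ : ∀ i ∈ x, 0 < absences D₂ i) :
      Splittable (t ::ₘ T) := by
    rw [hT, ← Multiset.add_cons, hD, add_comm]
    exact splittable_add_of_two_copies hxx hD₁ hD₂
  subst hx
  simp only [Multiset.insert_eq_cons, ← Multiset.singleton_add] at hsplit
  rcases hmiss with hat | hbt | hct
  · exact hsplit (D₁ := {t₂} + {t₃}) (D₂ := {t} + {t₁}) (by abel) (by simp [*]) (by simp [*])
  · exact hsplit (D₁ := {t₁} + {t₃}) (D₂ := {t} + {t₂}) (by abel) (by simp [*]) (by simp [*])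
  · exact hsplit (D₁ := {t₁} + {t₂}) (D₂ := {t} + {t₃}) (by abel) (by simp [*]) (by simp [*])

theorem splittable_of_not_special (hT : ∀ t ∈ T, t.card = 3) (hn : 8 ≤ T.card)
    (h2 : ∀ i, 2 ≤ absences T i) (hsp : ¬ Special T) : Splittable T := by
  induction T using Multiset.strongInductionOn with
  | ih T ih =>
    by_cases htight : {i | absences T i = 2}.Subsingleton
    · obtain hcard | hcard := hn.eq_or_lt
      · exact splittable_of_card_eq_eight hT hcard.symm h2 htight
      obtain ⟨t, ht, hcontains⟩ := exists_mem_containing_of_subsingleton (by omega) htight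
      obtain ⟨T', rfl⟩ := Multiset.exists_cons_of_mem ht
      rw [Multiset.card_cons] at hcard
      by_cases hsp' : Special T'
      · exact splittable_cons_of_special (hT t ht) (by omega) hsp' hsp
      · exact (ih T' (Multiset.lt_cons_self T' t) (fun u hu => hT u (Multiset.mem_cons_of_mem hu))
          (by omega) (le_absences_of_le_absences_cons h2 hcontains) hsp').mono
          (Multiset.le_cons_self T' t)
    · obtain ⟨a, ha, b, hb, hab⟩ := Set.not_subsingleton_iff.1 htight
      exact splittable_of_two_tight hT hn h2 hsp hab ha hb

end Special

/-- A finite multiset of `n ≥ 8` triples admits a nice partial 2-coloring coloring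
exactly `4` triples with each of the two colors if and only if it is fair and
non-special. -/
theorem nice_partial_two_coloring_exactly_four_iff
    (T : Multiset (Finset ℕ+)) (hT : ∀ t ∈ T, t.card = 3)
    (hn : 8 ≤ Multiset.card T) :
    (∃ f : Fin 2 → Multiset (Finset ℕ+),
        NicePartialColoring 2 T f ∧ ∀ j, Multiset.card (f j) = 4) ↔
      (CFair 2 T ∧ ¬ Special T) := by
  rw [exists_nicePartialColoring_iff_splittable hT hn, cFair_iff_forall_le_absences (by omega)]
  exact ⟨fun h => ⟨h.two_le_absences, h.not_special⟩,
    fun h => splittable_of_not_special hT hn h.1 h.2⟩
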